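/- Let G be a finite abelian group, H a subgroup of G, and m a natural number. Let f be a ℂ[G][u]-linear endomorphism of the free module (ℂ[G][u])^m, where ℂ[G][u] denotes the polynomial ring over the group algebra ℂ[G]. Regard (ℂ[G][u])^m as a module over ℂ[H][u] via the injective ring homomorphism ℂ[H][u] → ℂ[G][u] applying, coefficientwise, the inclusion-induced map ℂ[H] → ℂ[G]. Then det_{ℂ[H][u]}(f) = N_{G/H}(det_{ℂ[G][u]}(f)), where det_{ℂ[H][u]}(f) is the determinant of f viewed as a ℂ[H][u]-linear endomorphism of (ℂ[G][u])^m, and N_{G/H}(Q) ∈ ℂ[H][u] denotes the determinant over ℂ[H][u] of the multiplication-by-Q endomorphism of ℂ[G][u]. -/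

import Mathlib

/-! If `s` is a complete system of representatives of the cosets `H g`, then `(i, h) ↦ h sᵢ` is a
bijection onto `G`, so every element of `R[G]` is a unique combination `∑ᵢ aᵢ sᵢ` with `aᵢ ∈ R[H]`.
Thus `R[G]` is free over `R[H]`, and by base change `R[G][u]` is free over `R[H][u]`. Determinants
are transitive in a free extension, being block determinants in the product basis. -/

open Function
open scoped MonoidAlgebra Polynomial

section Transversal

variable {R N M ι : Type*} [Semiring R] [Monoid N] [Monoid M] {φ : N →* M} {s : ι → M}

/-- The additive isomorphism `(aᵢ)ᵢ ↦ ∑ᵢ φ(aᵢ) sᵢ` attached to a system of representatives `s` for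
the left translation action of `N` on `M` through `φ`, encoded as the reindexing of coefficients
along `(i, n) ↦ φ n * s i`. -/
noncomputable def finsuppAddEquivOfTransversal (hs : Bijective fun p : ι × N ↦ φ p.2 * s p.1) :
    (ι →₀ R[N]) ≃+ R[M] :=
  (Finsupp.mapRange.addEquiv MonoidAlgebra.coeffAddEquiv).trans <|
    Finsupp.curryAddEquiv.symm.trans <|
      (Finsupp.domCongr (.ofBijective _ hs)).trans MonoidAlgebra.coeffAddEquiv.symm

theorem finsuppAddEquivOfTransversal_single_single
    (hs : Bijective fun p : ι × N ↦ φ p.2 * s p.1) (i : ι) (n : N) (r : R) :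
    finsuppAddEquivOfTransversal hs (.single i (.single n r)) = .single (φ n * s i) r := by
  simp [finsuppAddEquivOfTransversal]

theorem coe_finsuppAddEquivOfTransversal [Module R[N] R[M]]
    (hsmul : ∀ (a : R[N]) (x : R[M]), a • x = a.mapDomain φ * x)
    (hs : Bijective fun p : ι × N ↦ φ p.2 * s p.1) :
    ⇑(finsuppAddEquivOfTransversal hs) =
      Finsupp.linearCombination R[N] fun i ↦ (MonoidAlgebra.single (s i) 1 : R[M]) := by
  suffices h : (finsuppAddEquivOfTransversal hs).toAddMonoidHom = (Finsupp.linearCombination R[N]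
      fun i ↦ (MonoidAlgebra.single (s i) 1 : R[M])).toAddMonoidHom from congrArg DFunLike.coe h
  ext1 i
  refine MonoidAlgebra.addMonoidHom_ext fun n r ↦ ?_
  simp [hsmul, finsuppAddEquivOfTransversal_single_single]

/-- The `R[N]`-basis of `R[M]` given by a system of representatives `s` for the left translation
action of `N` on `M` through `φ`. The module structure is pinned down by `hsmul`, since for
noncommutative `R[N]` there is no `Algebra R[N] R[M]` to do so. -/
noncomputable def transversalBasis [Module R[N] R[M]]
    (hsmul : ∀ (a : R[N]) (x : R[M]), a • x = a.mapDomain φ * x)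
    (hs : Bijective fun p : ι × N ↦ φ p.2 * s p.1) :
    Module.Basis ι R[N] R[M] :=
  .ofRepr <| .symm <| .ofBijective
    (Finsupp.linearCombination _ fun i ↦ MonoidAlgebra.single (s i) 1) <| by
      rw [← coe_finsuppAddEquivOfTransversal hsmul hs]
      exact (finsuppAddEquivOfTransversal hs).bijective

end Transversal

theorem free_monoidAlgebra_of_subgroup {R G : Type*} [Semiring R] [Group G] (H : Subgroup G)
    [Module R[H] R[G]] (hsmul : ∀ (a : R[H]) (x : R[G]), a • x = a.mapDomain H.subtype * x) :
    Module.Free R[H] R[G] := by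
  obtain ⟨S, hS, -⟩ := H.exists_isComplement_right 1
  exact .of_basis <| transversalBasis (φ := H.subtype) (s := ((↑) : S → G)) hsmul <|
    hS.comp (Equiv.prodComm S H).bijective

theorem free_polynomial_of_free {R A : Type*} [CommSemiring R] [CommSemiring A] [Algebra R A]
    [Module.Free R A] [polynomialAlgebra : Algebra R[X] A[X]]
    (hmap : algebraMap R[X] A[X] = Polynomial.mapRingHom (algebraMap R A)) :
    Module.Free R[X] A[X] := by
  obtain rfl : polynomialAlgebra = Polynomial.algebra R A :=
    Algebra.algebra_ext _ _ (RingHom.congr_fun hmap)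
  let := Polynomial.algebra R A
  exact (Algebra.IsPushout.out (R := R) (S := R[X]) (R' := A) (S' := A[X])).free

theorem free_polynomial_monoidAlgebra_of_subgroup {R G : Type*} [CommSemiring R] [CommGroup G]
    (H : Subgroup G) [Algebra R[H][X] R[G][X]]
    (hmap : algebraMap R[H][X] R[G][X] =
      Polynomial.mapRingHom (MonoidAlgebra.mapDomainRingHom R H.subtype)) :
    Module.Free R[H][X] R[G][X] := by
  let : Algebra R[H] R[G] := (MonoidAlgebra.mapDomainRingHom R H.subtype).toAlgebra
  have := free_monoidAlgebra_of_subgroup (R := R) H fun _ _ ↦ rfl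
  exact free_polynomial_of_free hmap

-- `LinearMap.det` has the junk value `1` on a free module of infinite rank.
theorem stmt11_general {R G M : Type*} [CommRing R] [CommGroup G] (H : Subgroup G) [H.FiniteIndex]
    [Algebra R[H][X] R[G][X]]
    (hmap : algebraMap R[H][X] R[G][X] =
      Polynomial.mapRingHom (MonoidAlgebra.mapDomainRingHom R H.subtype))
    [AddCommGroup M] [Module R[G][X] M] [Module.Free R[G][X] M]
    [Module.Finite R[G][X] M] [Module R[H][X] M] [IsScalarTower R[H][X] R[G][X] M]
    (f : M →ₗ[R[G][X]] M) :
    LinearMap.det (f.restrictScalars R[H][X]) =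
      LinearMap.det (LinearMap.mulLeft R[H][X] (LinearMap.det f)) := by
  have := free_polynomial_monoidAlgebra_of_subgroup H hmap
  exact LinearMap.det_restrictScalars

/-- Let `G` be a finite abelian group, `H ≤ G`, `m ∈ ℕ`, and `f` a
`ℂ[G][u]`-linear endomorphism of the free module `(ℂ[G][u])^m`.  Regarding `(ℂ[G][u])^m` as a
module over `ℂ[H][u]` via the inclusion-induced ring homomorphism `ℂ[H][u] → ℂ[G][u]`, the
determinant of `f` over `ℂ[H][u]` equals `N_{G/H}(det_{ℂ[G][u]}(f))`, where `N_{G/H}(Q)` is the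
determinant over `ℂ[H][u]` of the multiplication-by-`Q` endomorphism of `ℂ[G][u]`. -/
theorem stmt11 (G : Type*) [CommGroup G] [Finite G] (H : Subgroup G) (m : ℕ)
    (f : (Fin m → Polynomial (MonoidAlgebra ℂ G)) →ₗ[Polynomial (MonoidAlgebra ℂ G)]
      (Fin m → Polynomial (MonoidAlgebra ℂ G))) :
    letI : Algebra (Polynomial (MonoidAlgebra ℂ ↥H)) (Polynomial (MonoidAlgebra ℂ G)) :=
      (Polynomial.mapRingHom (MonoidAlgebra.mapDomainRingHom ℂ H.subtype)).toAlgebra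
    LinearMap.det (LinearMap.restrictScalars (Polynomial (MonoidAlgebra ℂ ↥H)) f) =
      LinearMap.det
        (LinearMap.mulLeft (Polynomial (MonoidAlgebra ℂ ↥H)) (LinearMap.det f)) := by
  let : Algebra (Polynomial (MonoidAlgebra ℂ H)) (Polynomial (MonoidAlgebra ℂ G)) :=
    (Polynomial.mapRingHom (MonoidAlgebra.mapDomainRingHom ℂ H.subtype)).toAlgebra
  exact stmt11_general H rfl f
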